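/- Let K[n] be the set of nonempty subsets of {0, …, n}. For 0 ≤ k ≤ n define union-preserving maps j^k_n : K[n] → K[n] and r^k_n : K[n+1] → K[n] by setting, on singletons, j^k_n{i} = {i} if i ≤ k and j^k_n{i} = {0, …, i} if i > k; r^k_n{i} = {i} if i ≤ k, r^k_n{i} = {0, …, i−1} if i = k+1, and r^k_n{i} = {i−1} if i > k+1; and extending to arbitrary nonempty subsets S by taking the union over the singletons of S. For an order-preserving map φ between ordinals let φ_* denote the direct-image map on nonempty subsets; δ^i and σ^k denote the coface (injection skipping i) and codegeneracy (surjection hitting k twice) maps. Then the following equations hold (with the stated index ranges): (1) j^k_n ∘ j^h_n = j^h_n ∘ j^k_n = j^h_n for 0 ≤ h ≤ k ≤ n; (2) r^k_n ∘ (δ^{k+1})_* = id on K[n] for 0 ≤ k ≤ n; (3) j^k_n ∘ r^k_n = (σ^k)_* ∘ j^k_{n+1} for 0 ≤ k ≤ n; (4) j^h_n ∘ r^k_n = j^h_n ∘ (σ^k)_* for 0 ≤ h < k ≤ n; (5) r^k_n ∘ j^h_{n+1} = j^h_n ∘ r^k_n for 0 ≤ h ≤ k ≤ n; (6) r^k_n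 ∘ (δ^{i+1})_* = (δ^i)_* ∘ r^k_{n−1} for 0 ≤ k < i ≤ n; (7) j^k_n ∘ r^k_n ∘ r^k_{n+1} = j^k_n ∘ r^k_n ∘ (σ^{k+1})_* for 0 ≤ k ≤ n; (8) j^k_{n+1} ∘ (δ^h)_* ∘ j^k_n = j^k_{n+1} ∘ (δ^h)_* for 0 ≤ k ≤ n and 0 ≤ h ≤ n+1; (9) j^k_n ∘ r^k_n ∘ (δ^i)_* ∘ j^{k−1}_n = j^k_n ∘ r^k_n ∘ (δ^i)_* for 0 ≤ i ≤ k ≤ n; (10) (σ^h)_* ∘ j^k_{n+1} ∘ r^k_{n+1} = j^{k−1}_n ∘ r^{k−1}_n ∘ (σ^h)_* for 0 ≤ h < k ≤ n+1; (11) (σ^h)_* ∘ j^k_{n+1} ∘ r^k_{n+1} = j^k_n ∘ r^k_n ∘ (σ^{h+1})_* for 0 ≤ k ≤ h ≤ n. (Here composites are written in the usual right-to-left order, and each equation is an equality of maps between the appropriate sets of nonempty subsets.) -/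

import Mathlib

/-- `K n` is the set of nonempty subsets of the ordinal `[n] = {0, …, n}`. -/
def K (n : ℕ) : Type := {S : Finset (Fin (n + 1)) // S.Nonempty}

/-- The value of Moss's map `j^k_n` on the singleton `{i}`:
`{i}` if `i ≤ k`, and `{0, …, i}` if `i > k`. -/
def jS (n k : ℕ) (i : Fin (n + 1)) : Finset (Fin (n + 1)) :=
  if i.val ≤ k then {i} else Finset.Iic i

lemma jS_nonempty (n k : ℕ) (i : Fin (n + 1)) : (jS n k i).Nonempty := by
  unfold jS; split
  · exact Finset.singleton_nonempty _
  · exact ⟨i, Finset.mem_Iic.2 le_rfl⟩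

/-- The value of Moss's map `r^k_n` on the singleton `{i}` (for `i ≤ k ≤ n` the `min` is
just `i`): `{i}` if `i ≤ k`, `{0, …, i − 1}` if `i = k + 1`, and `{i − 1}` if `i > k + 1`. -/
def rS (n k : ℕ) (i : Fin (n + 2)) : Finset (Fin (n + 1)) :=
  if i.val ≤ k then {⟨min i.val n, by omega⟩}
  else if i.val = k + 1 then Finset.Iic ⟨i.val - 1, by have := i.isLt; omega⟩
  else {⟨i.val - 1, by have := i.isLt; omega⟩}

lemma rS_nonempty (n k : ℕ) (i : Fin (n + 2)) : (rS n k i).Nonempty := by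
  unfold rS; split
  · exact Finset.singleton_nonempty _
  · split
    · exact ⟨_, Finset.mem_Iic.2 le_rfl⟩
    · exact Finset.singleton_nonempty _

/-- Extension of a singleton-wise map to a union-preserving map on nonempty subsets. -/
def kMap {a b : ℕ} (f : Fin (a + 1) → Finset (Fin (b + 1)))
    (hf : ∀ i, (f i).Nonempty) (S : K a) : K b :=
  ⟨S.1.biUnion f, by
    obtain ⟨i, hi⟩ := S.2
    obtain ⟨x, hx⟩ := hf i
    exact ⟨x, Finset.mem_biUnion.2 ⟨i, hi, hx⟩⟩⟩

/-- Moss's map `j^k_n : K[n] → K[n]`. -/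
def j (n k : ℕ) : K n → K n := kMap (jS n k) (jS_nonempty n k)

/-- Moss's map `r^k_n : K[n+1] → K[n]`. -/
def r (n k : ℕ) : K (n + 1) → K n := kMap (rS n k) (rS_nonempty n k)

/-- The direct image map `φ_*` on nonempty subsets induced by `φ`. -/
def star {a b : ℕ} (φ : Fin (a + 1) → Fin (b + 1)) (S : K a) : K b :=
  ⟨S.1.image φ, S.2.image φ⟩

/-!
Order `K n` by inclusion. Each `j^k` is then a closure operator: its closed sets are those that
contain `Iic i` along with any of their elements `i > k`. This gives the equations between the
`j`s, and also those in which direct images are only compared after applying some `j`.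
On the other hand `r^k S` is `(σ^k)_* S`, enlarged by `Iic k` if `k + 1 ∈ S`. Under `j^k` this
enlargement amounts to closing `S` beforehand, `j^k ∘ r^k = (σ^k)_* ∘ j^k`; as direct images under
monotone surjections commute with suitable `j`s, the remaining equations reduce to the simplicial
identities.
-/

lemma val_predAbove {n : ℕ} (k : Fin (n + 1)) (i : Fin (n + 2)) :
    (k.predAbove i).val = if i.val ≤ k then i.val else i.val - 1 := by
  simp only [Fin.predAbove, Fin.lt_def, Fin.val_castSucc]
  split_ifs <;> simp only [Fin.val_pred, Fin.coe_castPred] <;> omega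

lemma val_succAbove {n : ℕ} (k : Fin (n + 2)) (i : Fin (n + 1)) :
    (k.succAbove i).val = if i.val < k then i.val else i.val + 1 := by
  simp only [Fin.succAbove, Fin.lt_def, Fin.val_castSucc]
  split_ifs <;> rfl

namespace K

variable {a b c n : ℕ}

instance : SetLike (K n) (Fin (n + 1)) where
  coe S := S.1
  coe_injective _ _ h := Subtype.ext (Finset.coe_injective h)

instance : PartialOrder (K n) := .ofSetLike (K n) (Fin (n + 1))

lemma mem_kMap {f : Fin (a + 1) → Finset (Fin (b + 1))} {hf : ∀ i, (f i).Nonempty} {S : K a}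
    {x : Fin (b + 1)} : x ∈ kMap f hf S ↔ ∃ i ∈ S, x ∈ f i :=
  Finset.mem_biUnion

lemma mem_star {φ : Fin (a + 1) → Fin (b + 1)} {S : K a} {x : Fin (b + 1)} :
    x ∈ star φ S ↔ ∃ i ∈ S, φ i = x :=
  Finset.mem_image

lemma star_mono (φ : Fin (a + 1) → Fin (b + 1)) : Monotone (star φ : K a → K b) :=
  fun _ _ hST => Finset.image_subset_image hST

lemma star_star (ψ : Fin (b + 1) → Fin (c + 1)) (φ : Fin (a + 1) → Fin (b + 1)) (S : K a) :
    star ψ (star φ S) = star (ψ ∘ φ) S :=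
  Subtype.ext Finset.image_image

lemma star_id (S : K n) : star id S = S :=
  Subtype.ext Finset.image_id

lemma mem_j {k : ℕ} {S : K n} {x : Fin (n + 1)} :
    x ∈ j n k S ↔ x ∈ S ∨ ∃ i ∈ S, k < i.val ∧ x ≤ i := by
  have mem_jS (i : Fin (n + 1)) : x ∈ jS n k i ↔ x = i ∨ k < i.val ∧ x ≤ i := by
    unfold jS
    split_ifs <;> simp only [Finset.mem_singleton, Finset.mem_Iic] <;> omega
  simp only [j, mem_kMap, mem_jS]
  grind

lemma mem_r {k : Fin (n + 1)} {S : K (n + 1)} {x : Fin (n + 1)} :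
    x ∈ r n k S ↔ x ∈ star k.predAbove S ∨ k.succ ∈ S ∧ x ≤ k := by
  have mem_rS (i : Fin (n + 2)) : x ∈ rS n k i ↔ k.predAbove i = x ∨ i = k.succ ∧ x ≤ k := by
    rw [Fin.ext_iff, val_predAbove]
    unfold rS
    split_ifs <;>
      simp only [Finset.mem_singleton, Finset.mem_Iic, Fin.ext_iff, Fin.le_def, Fin.val_succ] <;>
      omega
  simp only [r, mem_kMap, mem_rS, mem_star]
  grind

lemma mem_j_of_le {k : ℕ} {S : K n} {x i : Fin (n + 1)} (hi : i ∈ j n k S) (hki : k < i.val)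
    (hxi : x ≤ i) : x ∈ j n k S := by
  rcases mem_j.1 hi with hi | ⟨i', hi', hki', hii'⟩
  · exact mem_j.2 (.inr ⟨i, hi, hki, hxi⟩)
  · exact mem_j.2 (.inr ⟨i', hi', hki', hxi.trans hii'⟩)

/-- Moss's map `j^k_n` as a closure operator on the nonempty subsets of `[n]` ordered by
inclusion. -/
def jClosure (n k : ℕ) : ClosureOperator (K n) :=
  .mk₂ (j n k) (fun _ _ hx => mem_j.2 (.inl hx)) fun S T hST x hx => by
    rcases mem_j.1 hx with hx | ⟨i, hi, hki, hxi⟩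
    · exact hST hx
    · exact mem_j_of_le (hST hi) hki hxi

lemma le_j (k : ℕ) (S : K n) : S ≤ j n k S :=
  (jClosure n k).le_closure S

lemma j_mono (k : ℕ) : Monotone (j n k) :=
  (jClosure n k).monotone

lemma j_le_j_iff {k : ℕ} {S T : K n} : j n k S ≤ j n k T ↔ S ≤ j n k T :=
  (jClosure n k).le_closure_iff.symm

lemma j_eq_j_of_le_of_le {k : ℕ} {S T : K n} (hST : S ≤ T) (hTS : T ≤ j n k S) :
    j n k T = j n k S :=
  le_antisymm (j_le_j_iff.2 hTS) (j_mono k hST)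

lemma j_anti {h k : ℕ} (hhk : h ≤ k) (S : K n) : j n k S ≤ j n h S := fun x hx => by
  rcases mem_j.1 hx with hx | ⟨i, hi, hki, hxi⟩
  · exact le_j h S hx
  · exact mem_j.2 (.inr ⟨i, hi, hhk.trans_lt hki, hxi⟩)

lemma j_j_of_le {h k : ℕ} (hhk : h ≤ k) (S : K n) : j n k (j n h S) = j n h S :=
  le_antisymm ((j_anti hhk _).trans (j_le_j_iff.2 le_rfl)) (le_j k _)

lemma j_j_of_ge {h k : ℕ} (hhk : h ≤ k) (S : K n) : j n h (j n k S) = j n h S :=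
  j_eq_j_of_le_of_le (le_j k S) (j_anti hhk S)

lemma star_j_le_j_star {φ : Fin (a + 1) → Fin (b + 1)} (hφ : Monotone φ) {k l : ℕ}
    (hkl : ∀ i, k < i.val → l < (φ i).val) (S : K a) : star φ (j a k S) ≤ j b l (star φ S) := by
  intro x hx
  obtain ⟨y, hy, rfl⟩ := mem_star.1 hx
  rcases mem_j.1 hy with hy | ⟨i, hi, hki, hyi⟩
  · exact le_j l _ (mem_star.2 ⟨y, hy, rfl⟩)
  · exact mem_j.2 (.inr ⟨φ i, mem_star.2 ⟨i, hi, rfl⟩, hkl i hki, hφ hyi⟩)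

lemma j_star_j {φ : Fin (a + 1) → Fin (b + 1)} (hφ : Monotone φ) {k l : ℕ}
    (hkl : ∀ i, k < i.val → l < (φ i).val) (S : K a) :
    j b l (star φ (j a k S)) = j b l (star φ S) :=
  j_eq_j_of_le_of_le (star_mono φ (le_j k S)) (star_j_le_j_star hφ hkl S)

lemma j_star_le_star_j {φ : Fin (a + 1) → Fin (b + 1)} (hφ : Monotone φ)
    (hφ_surj : Function.Surjective φ) {k l : ℕ} (hkl : ∀ i, l < (φ i).val → k < i.val) (S : K a) :
    j b l (star φ S) ≤ star φ (j a k S) := by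
  intro x hx
  rcases mem_j.1 hx with hx | ⟨_, hφi, hli, hxi⟩
  · exact star_mono φ (le_j k S) hx
  obtain ⟨i, hi, rfl⟩ := mem_star.1 hφi
  obtain ⟨y, rfl⟩ := hφ_surj x
  rcases le_total y i with hyi | hiy
  · exact mem_star.2 ⟨y, mem_j.2 (.inr ⟨i, hi, hkl i hli, hyi⟩), rfl⟩
  · exact mem_star.2 ⟨i, le_j k S hi, (hφ hiy).antisymm hxi⟩

lemma j_star_eq_star_j {φ : Fin (a + 1) → Fin (b + 1)} (hφ : Monotone φ)
    (hφ_surj : Function.Surjective φ) {k l : ℕ} (hkl : ∀ i, k < i.val ↔ l < (φ i).val) (S : K a) :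
    j b l (star φ S) = star φ (j a k S) :=
  le_antisymm (j_star_le_star_j hφ hφ_surj (fun i => (hkl i).2) S)
    (star_j_le_j_star hφ (fun i => (hkl i).1) S)

lemma j_star_predAbove_of_lt {l : ℕ} {k : Fin (n + 1)} (hlk : l < k.val) (S : K (n + 1)) :
    j n l (star k.predAbove S) = star k.predAbove (j (n + 1) l S) :=
  j_star_eq_star_j (Fin.predAbove_right_monotone k) (Fin.predAbove_surjective k)
    (fun i => by rw [val_predAbove]; split_ifs <;> omega) S

lemma j_star_predAbove_of_ge {l : ℕ} {k : Fin (n + 1)} (hkl : k.val ≤ l) (S : K (n + 1)) :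
    j n l (star k.predAbove S) = star k.predAbove (j (n + 1) (l + 1) S) :=
  j_star_eq_star_j (Fin.predAbove_right_monotone k) (Fin.predAbove_surjective k)
    (fun i => by rw [val_predAbove]; split_ifs <;> omega) S

lemma star_predAbove_star_predAbove {i k : Fin (n + 1)} (hik : i ≤ k) (S : K (n + 2)) :
    star i.predAbove (star k.succ.predAbove S) =
      star k.predAbove (star i.castSucc.predAbove S) := by
  rw [star_star, star_star]
  congr 1
  ext1 x
  exact (CategoryTheory.ConcreteCategory.congr_hom (SimplexCategory.σ_comp_σ hik) x).symm

lemma star_predAbove_star_succAbove_succ (k : Fin (n + 1)) (S : K n) :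
    star k.predAbove (star k.succ.succAbove S) = S := by
  have h : k.predAbove ∘ k.succ.succAbove = id := by
    ext1 x
    exact CategoryTheory.ConcreteCategory.congr_hom (SimplexCategory.δ_comp_σ_succ (i := k)) x
  rw [star_star, h, star_id]

lemma star_predAbove_star_succAbove_of_gt {k : Fin (n + 1)} {i : Fin (n + 2)}
    (hki : k.castSucc < i) (S : K (n + 1)) :
    star k.castSucc.predAbove (star i.succ.succAbove S) =
      star i.succAbove (star k.predAbove S) := by
  rw [star_star, star_star]
  congr 1
  ext1 x
  exact CategoryTheory.ConcreteCategory.congr_hom (SimplexCategory.δ_comp_σ_of_gt hki) x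

lemma star_predAbove_le_r (k : Fin (n + 1)) (S : K (n + 1)) : star k.predAbove S ≤ r n k S :=
  fun _ hx => mem_r.2 (.inl hx)

lemma r_mono (k : ℕ) : Monotone (r n k) :=
  fun _ _ hST => Finset.biUnion_subset_biUnion_of_subset_left _ hST

lemma r_eq_star_predAbove {k : Fin (n + 1)} {S : K (n + 1)}
    (hS : k.succ ∈ S → ∀ i ≤ k.castSucc, i ∈ S) : r n k S = star k.predAbove S := by
  refine le_antisymm (fun x hx => ?_) (star_predAbove_le_r k S)
  rcases mem_r.1 hx with hx | ⟨hk, hxk⟩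
  · exact hx
  · exact mem_star.2 ⟨x.castSucc, hS hk _ (Fin.castSucc_le_castSucc_iff.2 hxk),
      Fin.predAbove_castSucc_of_le k x hxk⟩

lemma r_star_succAbove_succ (k : Fin (n + 1)) (S : K n) :
    r n k (star k.succ.succAbove S) = S := by
  have hk : k.succ ∉ star k.succ.succAbove S := fun hk => by
    obtain ⟨i, -, hi⟩ := mem_star.1 hk
    exact Fin.succAbove_ne _ i hi
  rw [r_eq_star_predAbove fun h => absurd h hk, star_predAbove_star_succAbove_succ]

lemma r_j_eq_star_predAbove {l : ℕ} {k : Fin (n + 1)} (hlk : l ≤ k.val) (S : K (n + 1)) :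
    r n k (j (n + 1) l S) = star k.predAbove (j (n + 1) l S) :=
  r_eq_star_predAbove fun hk _ hi =>
    mem_j_of_le hk (Nat.lt_succ_of_le hlk) (hi.trans k.castSucc_le_succ)

lemma j_r_of_lt {l : ℕ} {k : Fin (n + 1)} (hlk : l < k.val) (S : K (n + 1)) :
    j n l (r n k S) = j n l (star k.predAbove S) := by
  refine j_eq_j_of_le_of_le (star_predAbove_le_r k S) fun x hx => ?_
  rcases mem_r.1 hx with hx | ⟨hk, hxk⟩
  · exact le_j l _ hx
  · exact mem_j.2 (.inr ⟨k, mem_star.2 ⟨_, hk, Fin.predAbove_succ_self k⟩, hlk, hxk⟩)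

lemma j_r_le_star_predAbove_j (k : Fin (n + 1)) (S : K (n + 1)) :
    j n k (r n k S) ≤ star k.predAbove (j (n + 1) k S) :=
  calc j n k (r n k S)
    _ ≤ j n k (r n k (j (n + 1) k S)) := j_mono k (r_mono k (le_j k S))
    _ = j n k (star k.predAbove (j (n + 1) k S)) := by rw [r_j_eq_star_predAbove le_rfl]
    _ ≤ star k.predAbove (j (n + 1) k (j (n + 1) k S)) :=
      j_star_le_star_j (Fin.predAbove_right_monotone k) (Fin.predAbove_surjective k)
        (fun i => by rw [val_predAbove]; split_ifs <;> omega) _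
    _ = star k.predAbove (j (n + 1) k S) := by rw [j_j_of_le le_rfl]

lemma star_predAbove_j_le_j_r (k : Fin (n + 1)) (S : K (n + 1)) :
    star k.predAbove (j (n + 1) k S) ≤ j n k (r n k S) := by
  intro x hx
  obtain ⟨y, hy, rfl⟩ := mem_star.1 hx
  rcases mem_j.1 hy with hy | ⟨i, hi, hki, hyi⟩
  · exact le_j _ _ (star_predAbove_le_r k S (mem_star.2 ⟨y, hy, rfl⟩))
  have hσ : k.predAbove y ≤ k.predAbove i := Fin.predAbove_right_monotone k hyi
  have hki' : k.succ ≤ i := hki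
  rcases hki'.eq_or_lt with rfl | hki
  · rw [Fin.predAbove_succ_self] at hσ
    exact le_j _ _ (mem_r.2 (.inr ⟨hi, hσ⟩))
  · have hkσ : k.val < (k.predAbove i).val := by
      rw [val_predAbove]
      grind
    exact mem_j.2 (.inr ⟨_, star_predAbove_le_r k S (mem_star.2 ⟨i, hi, rfl⟩), hkσ, hσ⟩)

lemma j_r (k : Fin (n + 1)) (S : K (n + 1)) :
    j n k (r n k S) = star k.predAbove (j (n + 1) k S) :=
  le_antisymm (j_r_le_star_predAbove_j k S) (star_predAbove_j_le_j_r k S)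

lemma r_j {l : ℕ} {k : Fin (n + 1)} (hlk : l ≤ k.val) (S : K (n + 1)) :
    r n k (j (n + 1) l S) = j n l (r n k S) := by
  rw [r_j_eq_star_predAbove hlk]
  rcases hlk.lt_or_eq with hlk | rfl
  · rw [j_r_of_lt hlk, j_star_predAbove_of_lt hlk]
  · rw [j_r]

lemma r_star_succAbove_of_gt {k : Fin (n + 1)} {i : Fin (n + 2)} (hki : k.castSucc < i)
    (S : K (n + 1)) :
    r (n + 1) k (star i.succ.succAbove S) = star i.succAbove (r n k S) := by
  have succ_mem : k.castSucc.succ ∈ star i.succ.succAbove S ↔ k.succ ∈ S := by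
    have hk : i.succ.succAbove k.succ = k.castSucc.succ :=
      Fin.succAbove_of_castSucc_lt _ _ (Fin.succ_lt_succ_iff.2 hki)
    rw [← hk]
    exact Fin.succAbove_right_injective.mem_finset_image
  have image_Iic (x) : (∃ y ≤ k, i.succAbove y = x) ↔ x ≤ k.castSucc := by
    simp only [Fin.ext_iff, val_succAbove, Fin.le_def, Fin.lt_def, Fin.val_castSucc] at hki ⊢
    refine ⟨?_, fun hx => ⟨⟨x, by omega⟩, hx, if_pos (hx.trans_lt hki)⟩⟩
    rintro ⟨y, hy, hyx⟩
    rwa [← hyx, if_pos (hy.trans_lt hki)]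
  refine SetLike.ext fun x => ?_
  calc x ∈ r (n + 1) k.castSucc (star i.succ.succAbove S)
    _ ↔ x ∈ star i.succAbove (star k.predAbove S) ∨ k.succ ∈ S ∧ x ≤ k.castSucc := by
      rw [mem_r, star_predAbove_star_succAbove_of_gt hki, succ_mem]
    _ ↔ x ∈ star i.succAbove (r n k S) := by
      rw [← image_Iic, mem_star, mem_star]
      simp only [mem_r]
      grind

lemma star_predAbove_j_r_of_ge {k i : Fin (n + 1)} (hki : k ≤ i) (S : K (n + 2)) :
    star i.predAbove (j (n + 1) k (r (n + 1) k S)) =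
      j n k (r n k (star i.succ.predAbove S)) := by
  have hki' : k.val < i.succ.val := Nat.lt_succ_of_le hki
  calc star i.predAbove (j (n + 1) k (r (n + 1) k S))
    _ = star i.predAbove (star k.castSucc.predAbove (j (n + 2) k S)) :=
      congrArg _ (j_r k.castSucc S)
    _ = star k.predAbove (star i.succ.predAbove (j (n + 2) k S)) :=
      (star_predAbove_star_predAbove hki _).symm
    _ = star k.predAbove (j (n + 1) k (star i.succ.predAbove S)) := by
      rw [j_star_predAbove_of_lt hki']
    _ = j n k (r n k (star i.succ.predAbove S)) := (j_r k _).symm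

lemma star_predAbove_j_r_of_le {i k : Fin (n + 1)} (hik : i ≤ k) (S : K (n + 2)) :
    star i.predAbove (j (n + 1) k.succ (r (n + 1) k.succ S)) =
      j n k (r n k (star i.castSucc.predAbove S)) := by
  calc star i.predAbove (j (n + 1) k.succ (r (n + 1) k.succ S))
    _ = star i.predAbove (star k.succ.predAbove (j (n + 2) k.succ S)) := by rw [j_r]
    _ = star k.predAbove (star i.castSucc.predAbove (j (n + 2) k.succ S)) :=
      star_predAbove_star_predAbove hik _
    _ = star k.predAbove (j (n + 1) k (star i.castSucc.predAbove S)) :=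
      congrArg _ (j_star_predAbove_of_ge (k := i.castSucc) hik S).symm
    _ = j n k (r n k (star i.castSucc.predAbove S)) := (j_r k _).symm

lemma j_r_r (k : Fin (n + 1)) (S : K (n + 2)) :
    j n k (r n k (r (n + 1) k S)) = j n k (r n k (star k.succ.predAbove S)) := by
  rw [j_r, star_predAbove_j_r_of_ge le_rfl]

lemma j_star_succAbove_j (k : ℕ) (i : Fin (n + 2)) (S : K n) :
    j (n + 1) k (star i.succAbove (j n k S)) = j (n + 1) k (star i.succAbove S) :=
  j_star_j (Fin.strictMono_succAbove i).monotone
    (fun x hx => by rw [val_succAbove]; split_ifs <;> omega) S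

lemma j_r_star_succAbove_j {k : Fin (n + 1)} {i : Fin (n + 2)} (hik : i ≤ k.castSucc) (S : K n) :
    j n k (r n k (star i.succAbove (j n (k - 1) S))) = j n k (r n k (star i.succAbove S)) := by
  have hik' : i.val ≤ k.val := hik
  rw [j_r, j_r, j_star_j (Fin.strictMono_succAbove i).monotone fun x hx => ?_]
  rw [val_succAbove]
  split_ifs <;> omega

end K

/-- S. Moss's equations for the maps `j^k_n`, `r^k_n` and the direct images of the coface
maps `δ^i` (realized as `Fin.succAbove i`, the order-preserving injection skipping `i`) and
codegeneracy maps `σ^k` (realized as `Fin.predAbove k`, the order-preserving surjection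
taking the value `k` twice), with composites written right-to-left. -/
theorem moss_equations :
    -- (1) j^k_n ∘ j^h_n = j^h_n ∘ j^k_n = j^h_n,  0 ≤ h ≤ k ≤ n
    (∀ (n h k : ℕ) (_hhk : h ≤ k) (_hkn : k ≤ n) (S : K n),
      j n k (j n h S) = j n h S ∧ j n h (j n k S) = j n h S) ∧
    -- (2) r^k_n ∘ (δ^{k+1})_* = id,  0 ≤ k ≤ n
    (∀ (n k : ℕ) (_hkn : k ≤ n) (S : K n),
      r n k (star (Fin.succAbove (⟨k + 1, by omega⟩ : Fin (n + 2))) S) = S) ∧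
    -- (3) j^k_n ∘ r^k_n = (σ^k)_* ∘ j^k_{n+1},  0 ≤ k ≤ n
    (∀ (n k : ℕ) (_hkn : k ≤ n) (S : K (n + 1)),
      j n k (r n k S) =
        star (Fin.predAbove (⟨k, by omega⟩ : Fin (n + 1))) (j (n + 1) k S)) ∧
    -- (4) j^h_n ∘ r^k_n = j^h_n ∘ (σ^k)_*,  0 ≤ h < k ≤ n
    (∀ (n h k : ℕ) (_hhk : h < k) (_hkn : k ≤ n) (S : K (n + 1)),
      j n h (r n k S) = j n h (star (Fin.predAbove (⟨k, by omega⟩ : Fin (n + 1))) S)) ∧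
    -- (5) r^k_n ∘ j^h_{n+1} = j^h_n ∘ r^k_n,  0 ≤ h ≤ k ≤ n
    (∀ (n h k : ℕ) (_hhk : h ≤ k) (_hkn : k ≤ n) (S : K (n + 1)),
      r n k (j (n + 1) h S) = j n h (r n k S)) ∧
    -- (6) r^k_{n+1} ∘ (δ^{i+1})_* = (δ^i)_* ∘ r^k_n,  0 ≤ k < i ≤ n+1
    (∀ (n k i : ℕ) (_hki : k < i) (_hin : i ≤ n + 1) (S : K (n + 1)),
      r (n + 1) k (star (Fin.succAbove (⟨i + 1, by omega⟩ : Fin (n + 3))) S) =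
        star (Fin.succAbove (⟨i, by omega⟩ : Fin (n + 2))) (r n k S)) ∧
    -- (7) j^k_n ∘ r^k_n ∘ r^k_{n+1} = j^k_n ∘ r^k_n ∘ (σ^{k+1})_*,  0 ≤ k ≤ n
    (∀ (n k : ℕ) (_hkn : k ≤ n) (S : K (n + 2)),
      j n k (r n k (r (n + 1) k S)) =
        j n k (r n k (star (Fin.predAbove (⟨k + 1, by omega⟩ : Fin (n + 2))) S))) ∧
    -- (8) j^k_{n+1} ∘ (δ^h)_* ∘ j^k_n = j^k_{n+1} ∘ (δ^h)_*,  0 ≤ k ≤ n, 0 ≤ h ≤ n+1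
    (∀ (n k h : ℕ) (_hkn : k ≤ n) (_hhn : h ≤ n + 1) (S : K n),
      j (n + 1) k (star (Fin.succAbove (⟨h, by omega⟩ : Fin (n + 2))) (j n k S)) =
        j (n + 1) k (star (Fin.succAbove (⟨h, by omega⟩ : Fin (n + 2))) S)) ∧
    -- (9) j^k_n ∘ r^k_n ∘ (δ^i)_* ∘ j^{k−1}_n = j^k_n ∘ r^k_n ∘ (δ^i)_*,  0 ≤ i ≤ k ≤ n
    (∀ (n i k : ℕ) (_hik : i ≤ k) (_hkn : k ≤ n) (S : K n),
      j n k (r n k (star (Fin.succAbove (⟨i, by omega⟩ : Fin (n + 2))) (j n (k - 1) S))) =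
        j n k (r n k (star (Fin.succAbove (⟨i, by omega⟩ : Fin (n + 2))) S))) ∧
    -- (10) (σ^h)_* ∘ j^k_{n+1} ∘ r^k_{n+1} = j^{k−1}_n ∘ r^{k−1}_n ∘ (σ^h)_*,
    --      0 ≤ h < k ≤ n+1
    (∀ (n h k : ℕ) (_hhk : h < k) (_hkn : k ≤ n + 1) (S : K (n + 2)),
      star (Fin.predAbove (⟨h, by omega⟩ : Fin (n + 1))) (j (n + 1) k (r (n + 1) k S)) =
        j n (k - 1) (r n (k - 1)
          (star (Fin.predAbove (⟨h, by omega⟩ : Fin (n + 2))) S))) ∧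
    -- (11) (σ^h)_* ∘ j^k_{n+1} ∘ r^k_{n+1} = j^k_n ∘ r^k_n ∘ (σ^{h+1})_*,  0 ≤ k ≤ h ≤ n
    (∀ (n k h : ℕ) (_hkh : k ≤ h) (_hhn : h ≤ n) (S : K (n + 2)),
      star (Fin.predAbove (⟨h, by omega⟩ : Fin (n + 1))) (j (n + 1) k (r (n + 1) k S)) =
        j n k (r n k (star (Fin.predAbove (⟨h + 1, by omega⟩ : Fin (n + 2))) S))) := by
  refine ⟨fun n h k hhk _ S => ⟨K.j_j_of_le hhk S, K.j_j_of_ge hhk S⟩,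
    fun n k hkn S => K.r_star_succAbove_succ ⟨k, by omega⟩ S,
    fun n k hkn S => K.j_r ⟨k, by omega⟩ S,
    fun n h k hhk hkn S => K.j_r_of_lt (k := ⟨k, by omega⟩) hhk S,
    fun n h k hhk hkn S => K.r_j (k := ⟨k, by omega⟩) hhk S,
    fun n k i hki hin S =>
      K.r_star_succAbove_of_gt (k := ⟨k, by omega⟩) (i := ⟨i, by omega⟩) hki S,
    fun n k hkn S => K.j_r_r ⟨k, by omega⟩ S,
    fun n k h _ hhn S => K.j_star_succAbove_j k ⟨h, by omega⟩ S,
    fun n i k hik hkn S =>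
      K.j_r_star_succAbove_j (k := ⟨k, by omega⟩) (i := ⟨i, by omega⟩) hik S,
    fun n h k hhk hkn S => ?_,
    fun n k h hkh hhn S =>
      K.star_predAbove_j_r_of_ge (k := ⟨k, by omega⟩) (i := ⟨h, by omega⟩) hkh S⟩
  obtain ⟨k, rfl⟩ := Nat.exists_eq_succ_of_ne_zero (Nat.ne_zero_of_lt hhk)
  exact K.star_predAbove_j_r_of_le (i := ⟨h, by omega⟩) (k := ⟨k, by omega⟩)
    (Nat.le_of_lt_succ hhk) S
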